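/- arXiv:0907.1809 — 2 statements merged into one kernel-verified Lean document; each statement's English description precedes it below -/
import Mathlib

section
/- Let (m_1, …, m_k) be an admissible distance sequence with k = 2s even, let χ : Q(m) → ℤ be the linear functional with χ(q_i) = m_i for all i, and let K = Ker χ equipped with the restriction of the bilinear form of Q(m). Then the quotient of K by its radical is isometric to the orthogonal complement, inside the standard Euclidean lattice ℤ^{2s−1}, of the vector f = 3e_1 + … + 3e_s + e_{s+1} + … + e_{2s−1}. -/
/-- Admissible distance sequences: the sequences of vertex distances between
consecutive leaves of marked admissible trees with `2 k` vertices. -/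
inductive AdmSeq : List ℤ → Prop
  | base : AdmSeq [2]
  | left (a : ℤ) (l : List ℤ) : AdmSeq (a :: l) → AdmSeq (3 :: (a + 1) :: l)
  | right (l : List ℤ) (a : ℤ) : AdmSeq (l ++ [a]) → AdmSeq (l ++ [a + 1, 3])
  | mid (l₁ : List ℤ) (a b : ℤ) (l₂ : List ℤ) :
      AdmSeq (l₁ ++ a :: b :: l₂) → AdmSeq (l₁ ++ (a + 1) :: 3 :: (b + 1) :: l₂)

/-- The bilinear form of the lattice `Q(m)`: `qᵢ·qᵢ = mᵢ - 2`, `qᵢ·qᵢ₊₁ = 1`,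
and `qᵢ·qⱼ = 0` for `|i - j| ≥ 2`. -/
def QForm (m : List ℤ) (x y : Fin m.length → ℤ) : ℤ :=
  ∑ i, ∑ j,
    (if i = j then m.get i - 2
      else if (i : ℕ) + 1 = (j : ℕ) ∨ (j : ℕ) + 1 = (i : ℕ) then 1 else 0) * x i * y j

/-- The characteristic functional `χ(x) = ∑ mᵢ xᵢ` of `Q(m)`. -/
def chiHom (m : List ℤ) : (Fin m.length → ℤ) →+ ℤ :=
  AddMonoidHom.mk' (fun x => ∑ i, m.get i * x i)
    (by intro a b; simp [mul_add, Finset.sum_add_distrib])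

/-- `K = Ker χ ⊆ Q(m)`. -/
def kerChi (m : List ℤ) : AddSubgroup (Fin m.length → ℤ) := (chiHom m).ker

/-- The functional `z ↦ 3(z_1 + … + z_s) + z_{s+1} + … + z_{2s-1}` on `ℤ^{2s-1}`,
i.e. the product with `f = 3e_1 + … + 3e_s + e_{s+1} + … + e_{2s-1}`. -/
def fHom (s : ℕ) : (Fin (2 * s - 1) → ℤ) →+ ℤ :=
  AddMonoidHom.mk' (fun z => ∑ i : Fin (2 * s - 1), (if (i : ℕ) < s then 3 else 1) * z i)
    (by intro a b; simp [mul_add, Finset.sum_add_distrib])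

/-- The orthogonal complement of `f` inside the standard Euclidean lattice `ℤ^{2s-1}`. -/
def fPerp (s : ℕ) : AddSubgroup (Fin (2 * s - 1) → ℤ) := (fHom s).ker

/-- Index skipping `j`. -/
def skp (j i : ℕ) : ℕ := if i < j then i else i + 1

/-- Adjacent to the insertion gap `j`. -/
def adj (j i : ℕ) : ℤ := if i + 1 = j ∨ i = j then 1 else 0

theorem sum_skp {A : Type*} [AddCommMonoid A] (g : ℕ → A) (j k : ℕ) (h : j ≤ k) :
    ∑ i ∈ Finset.range (k + 1), g i = g j + ∑ i ∈ Finset.range k, g (skp j i) := by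
  rw [Finset.sum_range, Finset.sum_range, Fin.sum_univ_succAbove _ (⟨j, by omega⟩ : Fin (k+1))]
  congr 1
  apply Finset.sum_congr rfl
  intro i _
  congr 1
  simp only [Fin.succAbove, skp, Fin.lt_def, Fin.val_castSucc]
  split_ifs <;> simp

theorem sum_adj (j k : ℕ) (h : j ≤ k) :
    ∑ i ∈ Finset.range k, adj j i = (if j = 0 then 0 else 1) + (if j = k then 0 else 1) := by
  have h1 : ∀ i, adj j i = (if i + 1 = j then 1 else 0) + (if i = j then 1 else 0) := by
    intro i; unfold adj; split_ifs <;> first | omega | rfl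
  simp only [h1, Finset.sum_add_distrib]
  congr 1
  · rcases j with _ | j
    · simp
    · simp; omega
  · simp; split_ifs <;> omega

theorem skp_cases (j k i : ℕ) (hi : i < k + 1) (hj : j ≤ k) : i = j ∨ ∃ i' < k, i = skp j i' := by
  unfold skp
  rcases lt_trichotomy i j with h | h | h
  · right; exact ⟨i, by omega, by simp [h]⟩
  · left; exact h
  · right; exact ⟨i - 1, by omega, by rw [if_neg (by omega)]; omega⟩

structure LatInv (k n : ℕ) (M : ℕ → ℤ) (P : ℕ → Fin n → ℤ) (d : Fin n → ℤ) : Prop where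
  kn : k = n + 1
  gram : ∀ i < k, ∀ j < k, P i ⬝ᵥ P j =
    if i = j then M i - 2 else if i + 1 = j ∨ j + 1 = i then -1 else 0
  del : ∀ i < k, d ⬝ᵥ P i = (if i = 0 then 1 else 0) - (if i + 1 = k then 1 else 0)
  bd : ∀ t, |d t| + ∑ i ∈ Finset.range k, |P i t| ≤ 3
  nrm : d ⬝ᵥ d + ∑ i ∈ Finset.range k, M i = 5 * k - 3
  surj : ∀ z : Fin n → ℤ, ∃ x : ℕ → ℤ, ∑ i ∈ Finset.range k, x i • P i = z

theorem LatInv.insert {k n : ℕ} {M : ℕ → ℤ} {P : ℕ → Fin n → ℤ} {d : Fin n → ℤ}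
    (H : LatInv k n M P d) (M' : ℕ → ℤ) (j : ℕ) (hj : j ≤ k) (h3 : M' j = 3)
    (hM : ∀ i < k, M' (skp j i) = M i + adj j i) :
    ∃ P' : ℕ → Fin (n + 1) → ℤ, ∃ d', LatInv (k + 1) (n + 1) M' P' d' := by
  have hk0 : 0 < k := by have := H.kn; omega
  obtain ⟨P', hPj, hPs⟩ : ∃ P' : ℕ → Fin (n + 1) → ℤ, P' j = Matrix.vecCons 1 0 ∧
      ∀ i, P' (skp j i) = Matrix.vecCons (- adj j i) (P i) := by
    refine ⟨fun i => if i = j then Matrix.vecCons 1 0 else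
      if i < j then Matrix.vecCons (- adj j i) (P i)
      else Matrix.vecCons (- adj j (i-1)) (P (i-1)), by simp, ?_⟩
    intro i
    unfold skp
    by_cases h : i < j
    · simp [h, h.ne]
    · simp only [h, if_false]
      rw [if_neg (by omega), if_neg (by omega)]; simp
  obtain ⟨e, he⟩ : ∃ e : ℤ, e = if j = 0 then 1 else if j = k then -1 else 0 := ⟨_, rfl⟩
  refine ⟨P', Matrix.vecCons e d, ?_, ?_, ?_, ?_, ?_, ?_⟩
  · have := H.kn; omega
  · intro a ha b hb
    rcases skp_cases j k a ha hj with rfl | ⟨a', ha', rfl⟩ <;>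
    rcases skp_cases _ k b hb hj with rfl | ⟨b', hb', rfl⟩
    · simp [hPj, h3]
    · simp only [hPj, hPs, Matrix.cons_dotProduct_cons, zero_dotProduct]
      unfold adj skp
      split_ifs <;> first | contradiction | omega | simp
    · simp only [hPj, hPs, Matrix.cons_dotProduct_cons, dotProduct_zero]
      unfold adj skp
      split_ifs <;> first | contradiction | omega | simp
    · simp only [hPs, Matrix.cons_dotProduct_cons, H.gram a' ha' b' hb', hM a' ha']
      unfold adj skp
      split_ifs <;> first | contradiction | omega | simp
  · intro a ha
    rcases skp_cases j k a ha hj with rfl | ⟨a', ha', rfl⟩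
    · simp only [hPj, Matrix.cons_dotProduct_cons, dotProduct_zero, he]
      split_ifs <;> first | contradiction | omega | simp
    · simp only [hPs, Matrix.cons_dotProduct_cons, H.del a' ha', he]
      unfold adj skp
      split_ifs <;> first | contradiction | omega | simp
  · intro t
    rw [sum_skp _ j k hj]
    simp only [hPj, hPs]
    refine Fin.cases ?_ (fun t => ?_) t
    · have h1 : ∀ i, |adj j i| = adj j i := by intro i; unfold adj; split_ifs <;> simp
      simp only [Matrix.cons_val_zero, abs_neg, h1, sum_adj j k hj, he]
      split_ifs <;> first | contradiction | omega | simp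
    · simpa using H.bd t
  · rw [sum_skp _ j k hj, Finset.sum_congr rfl (fun i hi => hM i (Finset.mem_range.1 hi)),
      Finset.sum_add_distrib, sum_adj j k hj, h3, Matrix.cons_dotProduct_cons]
    have := H.nrm
    push_cast
    rw [he]
    split_ifs <;> first | omega | linarith
  · intro z
    obtain ⟨x, hx⟩ := H.surj (fun t => z t.succ)
    refine ⟨fun i => if i = j then z 0 + ∑ i ∈ Finset.range k, x i * adj j i
      else if i < j then x i else x (i - 1), ?_⟩
    rw [sum_skp _ j k hj]
    have h1 : ∀ i, (if skp j i = j then z 0 + ∑ i ∈ Finset.range k, x i * adj j i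
      else if skp j i < j then x (skp j i) else x (skp j i - 1)) = x i := by
      intro i; unfold skp
      by_cases h : i < j
      · simp [h, h.ne]
      · simp only [h, if_false]
        rw [if_neg (by omega), if_neg (by omega)]; simp
    simp only [h1, hPj, hPs, if_true]
    funext t
    refine Fin.cases ?_ (fun t => ?_) t
    · simp [Finset.sum_apply]
    · have := congrFun hx t
      simpa [Finset.sum_apply] using this

theorem AdmSeq.inv {m : List ℤ} (h : AdmSeq m) :
    ∃ n, ∃ P : ℕ → Fin n → ℤ, ∃ d, LatInv m.length n (fun i => m.getD i 0) P d := by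
  induction h with
  | base =>
    refine ⟨0, fun _ => 0, 0, by simp, ?_, ?_, ?_, by simp, ?_⟩
    · intro i hi j hj; simp at hi hj; subst hi hj; simp
    · intro i hi; simp at hi; subst hi; simp
    · intro t; exact t.elim0
    · intro z; exact ⟨0, Subsingleton.elim _ _⟩
  | left a l _ ih =>
    obtain ⟨n, P, d, H⟩ := ih
    refine ⟨n + 1, H.insert _ 0 (by omega) (by simp) ?_⟩
    intro i hi
    rcases i with _ | i <;> simp [skp, adj]
  | right l a _ ih =>
    obtain ⟨n, P, d, H⟩ := ih
    have := H.insert (fun i => (l ++ [a + 1, 3]).getD i 0) (l.length + 1) (by simp) (by simp) ?_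
    · obtain ⟨P', d', H'⟩ := this
      exact ⟨n + 1, P', d', by simpa using H'⟩
    intro i hi
    simp at hi
    rcases Nat.lt_or_eq_of_le hi with h | rfl
    · have h' : ¬ (i + 1 = l.length + 1 ∨ i = l.length + 1) := by omega
      simp [skp, adj, h, h', hi, List.getElem?_append]
      omega
    · simp [skp, adj]
  | mid l₁ a b l₂ _ ih =>
    obtain ⟨n, P, d, H⟩ := ih
    have := H.insert (fun i => (l₁ ++ (a + 1) :: 3 :: (b + 1) :: l₂).getD i 0) (l₁.length + 1)
      (by simp) (by simp) ?_
    · obtain ⟨P', d', H'⟩ := this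
      exact ⟨n + 1, P', d', by
        have e : (l₁ ++ (a + 1) :: 3 :: (b + 1) :: l₂).length
          = (l₁ ++ a :: b :: l₂).length + 1 := by simp; omega
        rw [e]; exact H'⟩
    intro i hi
    rcases lt_or_ge i l₁.length with h | h
    · have h' : ¬ (i + 1 = l₁.length + 1 ∨ i = l₁.length + 1) := by omega
      simp only [skp, adj, h', if_pos (show i < l₁.length + 1 by omega)]
      simp [h, List.getElem?_append]
    · obtain ⟨r, rfl⟩ := Nat.exists_eq_add_of_le h
      rcases r with _ | _ | r
      · simp [skp, adj]
      · simp only [skp, adj]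
        rw [if_neg (show ¬ l₁.length + (0 + 1) < l₁.length + 1 by omega)]
        simp [add_assoc]
      · simp only [skp, adj]
        rw [if_neg (by omega), if_neg (by omega)]
        simp [List.getElem?_append, add_assoc]

theorem exists_signed_perm (s : ℕ) (hs : 1 ≤ s) (c : Fin (2 * s - 1) → ℤ)
    (hc : ∀ t, |c t| = 1 ∨ |c t| = 3) (hn : ∑ t, c t * c t = 10 * s - 1) :
    ∃ σ : Equiv.Perm (Fin (2 * s - 1)), ∃ ε : Fin (2 * s - 1) → ℤ,
      ∀ t, ε t * ε t = 1 ∧ c (σ t) = ε t * (if (t : ℕ) < s then 3 else 1) := by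
  have h1 : ∀ t, c t * c t = 1 + 8 * (if |c t| = 3 then 1 else 0) := by
    intro t
    rw [← abs_mul_abs_self]
    rcases hc t with h | h <;> simp [h]
  have h2 : Fintype.card {t // |c t| = 3} = s := by
    simp only [h1, Finset.sum_add_distrib, ← Finset.mul_sum, Finset.sum_boole] at hn
    rw [Fintype.card_subtype]
    simp at hn
    omega
  have h3 : Fintype.card {t : Fin (2 * s - 1) // (t : ℕ) < s} = s := by
    have e : {t : Fin (2 * s - 1) // (t : ℕ) < s} ≃ Fin s :=
      { toFun := fun t => ⟨t.1, t.2⟩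
        invFun := fun t => ⟨⟨t.1, by omega⟩, t.2⟩
        left_inv := fun t => rfl
        right_inv := fun t => rfl }
    simpa using Fintype.card_congr e
  have e := Fintype.equivOfCardEq (h3.trans h2.symm)
  refine ⟨e.extendSubtype, fun t => (c (e.extendSubtype t)).sign, fun t => ?_⟩
  have hne : c (e.extendSubtype t) ≠ 0 := by
    intro h0
    rcases hc (e.extendSubtype t) with h | h <;> simp [h0] at h
  constructor
  · rcases lt_or_gt_of_ne hne with h | h
    · simp [Int.sign_eq_neg_one_of_neg h]
    · simp [Int.sign_eq_one_of_pos h]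
  · have : |c (e.extendSubtype t)| = if (t : ℕ) < s then 3 else 1 := by
      split_ifs with h
      · exact e.extendSubtype_mem t h
      · exact (hc _).resolve_right (e.extendSubtype_not_mem t h)
    rw [← this, Int.sign_mul_abs]

theorem neg_pow_sq (i : ℕ) : ((-1 : ℤ) ^ i) * (-1) ^ i = 1 := by
  rw [← mul_pow]; simp

/-- The final embedding data in the even case. -/
theorem LatInv.final {k n : ℕ} {M : ℕ → ℤ} {P : ℕ → Fin n → ℤ} {d : Fin n → ℤ}
    (H : LatInv k n M P d) (hk : Even k) : ∃ c : Fin n → ℤ,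
      (∀ i < k, c ⬝ᵥ P i = (-1) ^ i * M i) ∧ (∀ t, |c t| = 1 ∨ |c t| = 3) ∧
      c ⬝ᵥ c = 5 * k - 1 := by
  have hk0 : 0 < k := by have := H.kn; omega
  have hk1 : ((-1 : ℤ)) ^ (k - 1) = -1 := by
    apply Odd.neg_one_pow
    obtain ⟨r, hr⟩ := hk
    exact ⟨r - 1, by omega⟩
  obtain ⟨w, hw⟩ : ∃ w : Fin n → ℤ, w = ∑ i ∈ Finset.range k, (-1 : ℤ) ^ i • P i := ⟨_, rfl⟩
  have hP : ∀ i < k, (w + d) ⬝ᵥ P i = (-1) ^ i * M i := by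
    intro i hi
    rw [add_dotProduct, H.del i hi, hw, sum_dotProduct]
    have h1 : ∀ j ∈ Finset.range k, ((-1 : ℤ) ^ j • P j) ⬝ᵥ P i =
        (if j = i then (-1) ^ i * (M i - 2) else 0) + (if j = i + 1 then (-1) ^ i else 0)
        + (if j + 1 = i then (-1) ^ i else 0) := by
      intro j hj
      rw [smul_dotProduct, H.gram j (Finset.mem_range.1 hj) i hi, smul_eq_mul]
      by_cases e1 : j = i
      · subst e1; simp
      by_cases e2 : j = i + 1
      · subst e2; simp [pow_succ]; omega
      by_cases e3 : j + 1 = i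
      · subst e3; simp [pow_succ]; omega
      rw [if_neg e1, if_neg (by omega), if_neg e1, if_neg e2, if_neg e3]; simp
    rw [Finset.sum_congr rfl h1, Finset.sum_add_distrib, Finset.sum_add_distrib]
    have h2 : ∑ j ∈ Finset.range k, (if j + 1 = i then (-1 : ℤ) ^ i else 0)
        = if i = 0 then 0 else (-1) ^ i := by
      rcases i with _ | i
      · simp
      · simp; omega
    rw [h2, Finset.sum_ite_eq', Finset.sum_ite_eq', if_pos (Finset.mem_range.2 hi)]
    simp only [Finset.mem_range]
    by_cases e1 : i = 0 <;> by_cases e2 : i + 1 = k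
    · subst e1; subst e2; simp at hk
    · subst e1; rw [if_pos (by omega)]; simp [e2]; ring
    · rw [if_neg (by omega)]
      have : (-1 : ℤ) ^ i = -1 := by
        have e3 : k - 1 = i := by omega
        rw [← e3]; exact hk1
      simp [e1, e2, this]; ring
    · rw [if_pos (by omega)]; simp [e1, e2]; ring
  refine ⟨w + d, hP, ?_, ?_⟩
  · intro t
    have hb : |(w + d) t| ≤ 3 := by
      refine le_trans ?_ (H.bd t)
      rw [Pi.add_apply, add_comm]
      refine (abs_add_le _ _).trans ?_
      gcongr
      rw [hw, Finset.sum_apply]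
      refine (Finset.abs_sum_le_sum_abs _ _).trans (le_of_eq ?_)
      apply Finset.sum_congr rfl
      intro i _
      simp [abs_mul]
    have hodd : ¬ (2 : ℤ) ∣ (w + d) t := by
      have key : ∀ z : Fin n → ℤ, (2 : ℤ) ∣ (w + d) ⬝ᵥ z - z ⬝ᵥ z := by
        intro z
        obtain ⟨x, rfl⟩ := H.surj z
        refine Finset.sum_induction _ (fun z => (2 : ℤ) ∣ (w + d) ⬝ᵥ z - z ⬝ᵥ z) ?_ ?_ ?_
        · rintro a b ⟨p, hp⟩ ⟨q, hq⟩
          refine ⟨p + q - a ⬝ᵥ b, ?_⟩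
          rw [dotProduct_add (w + d) a b, dotProduct_add (a + b) a b, add_dotProduct a b a,
            add_dotProduct a b b, dotProduct_comm b a]
          linear_combination hp + hq
        · simp
        · intro i hi
          have hi := Finset.mem_range.1 hi
          rw [dotProduct_smul, hP i hi, dotProduct_smul, smul_dotProduct, H.gram i hi i hi, if_pos rfl]
          simp only [smul_eq_mul]
          rcases neg_one_pow_eq_or ℤ i with h | h <;> rw [h] <;>
          rcases Int.even_or_odd' (x i) with ⟨p, hp | hp⟩ <;> rw [hp]
          · exact ⟨p * M i - 2 * p * p * (M i - 2), by ring⟩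
          · exact ⟨p * M i + 1 - (2 * p * p + 2 * p) * (M i - 2), by ring⟩
          · exact ⟨-p * M i - 2 * p * p * (M i - 2), by ring⟩
          · exact ⟨- p * M i - M i + 1 - (2 * p * p + 2 * p) * (M i - 2), by ring⟩
      have := key (Pi.single t 1)
      simp only [dotProduct_single, Pi.single_eq_same, mul_one] at this
      omega
    rw [abs_le] at hb
    generalize (w + d) t = z at *
    rcases abs_cases z with h | h <;> omega
  · rw [dotProduct_add, dotProduct_comm _ d, dotProduct_add, hw, dotProduct_sum]
    rw [← hw]
    have h1 : ∀ i ∈ Finset.range k, (w + d) ⬝ᵥ ((-1 : ℤ) ^ i • P i) = M i := by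
      intro i hi
      rw [dotProduct_smul, hP i (Finset.mem_range.1 hi), smul_eq_mul, ← mul_assoc, neg_pow_sq,
        one_mul]
    rw [Finset.sum_congr rfl h1]
    have h2 : d ⬝ᵥ w = 2 := by
      rw [hw, dotProduct_sum]
      have h1 : ∀ i ∈ Finset.range k, d ⬝ᵥ ((-1 : ℤ) ^ i • P i) =
          (if i = 0 then 1 else 0) + (if i = k - 1 then 1 else 0) := by
        intro i hi
        rw [dotProduct_smul, H.del i (Finset.mem_range.1 hi), smul_eq_mul]
        by_cases e1 : i = 0 <;> by_cases e2 : i = k - 1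
        · have : k = 1 := by omega
          subst this; simp at hk
        · subst e1; rw [if_neg (show ¬ 0 + 1 = k by omega)]; simp [e2]
        · subst e2; rw [hk1, if_pos (show k - 1 + 1 = k by omega)]; simp [e1]
        · rw [if_neg (show ¬ i + 1 = k by omega)]; simp [e1, e2]
      rw [Finset.sum_congr rfl h1, Finset.sum_add_distrib, Finset.sum_ite_eq', Finset.sum_ite_eq',
        if_pos (by simp; omega), if_pos (by simp; omega)]
      norm_num
    have := H.nrm
    linarith

/-- for an admissible distance sequence `m` of even length `k = 2s`, the
quotient of `K = Ker χ ⊆ Q(m)` by its radical is isometric to the orthogonal complement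
of `f = 3e_1 + … + 3e_s + e_{s+1} + … + e_{2s-1}` in the standard Euclidean `ℤ^{2s-1}`;
equivalently, there is a surjective form-preserving homomorphism `K → f^⊥` whose kernel
is exactly the radical of `K`. -/
theorem kerChi_mod_radical_even (m : List ℤ) (hm : AdmSeq m) (s : ℕ) (hs : 1 ≤ s)
    (hk : m.length = 2 * s) :
    ∃ φ : kerChi m →+ fPerp s,
      Function.Surjective φ ∧
      (∀ x y : kerChi m,
        (∑ t : Fin (2 * s - 1), (φ x).val t * (φ y).val t) = QForm m x.val y.val) ∧
      (∀ x : kerChi m, φ x = 0 ↔ ∀ y : kerChi m, QForm m x.val y.val = 0) := by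
  obtain ⟨n, P, d, H⟩ := hm.inv
  obtain rfl : n = 2 * s - 1 := by have := H.kn; omega
  obtain ⟨c, hcP, hc, hcc⟩ := H.final (by rw [hk]; exact even_two_mul s)
  obtain ⟨σ, ε, hσ⟩ := exists_signed_perm s hs c hc (by
    have : ∑ t, c t * c t = c ⬝ᵥ c := rfl
    rw [this, hcc, hk]; push_cast; ring)
  obtain ⟨F, hF⟩ : ∃ F : (Fin m.length → ℤ) →+ (Fin (2 * s - 1) → ℤ),
      ∀ x, F x = ∑ i : Fin m.length, ((-1 : ℤ) ^ (i : ℕ) * x i) • P i :=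
    ⟨AddMonoidHom.mk' (fun x => ∑ i : Fin m.length, ((-1 : ℤ) ^ (i : ℕ) * x i) • P i)
      (by intro a b; simp [mul_add, add_smul, Finset.sum_add_distrib]), fun x => rfl⟩
  have hFc : ∀ x, c ⬝ᵥ F x = chiHom m x := by
    intro x
    rw [hF, dotProduct_sum]
    change _ = ∑ i, m.get i * x i
    apply Finset.sum_congr rfl
    intro i _
    rw [dotProduct_smul, hcP i i.2, smul_eq_mul]
    have : m.getD i 0 = m.get i := by simp
    rw [this]
    linear_combination (x i * m.get i) * neg_pow_sq i
  have hFQ : ∀ x y, F x ⬝ᵥ F y = QForm m x y := by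
    intro x y
    rw [hF, hF, sum_dotProduct]
    unfold QForm
    apply Finset.sum_congr rfl
    intro i _
    rw [dotProduct_sum]
    apply Finset.sum_congr rfl
    intro j _
    rw [smul_dotProduct, dotProduct_smul, H.gram i i.2 j j.2, smul_eq_mul, smul_eq_mul]
    have hg : m.getD i 0 = m.get i := by simp
    rw [hg]
    by_cases e1 : i = j
    · subst e1
      simp only [if_true]
      linear_combination (x i * y i * (m.get i - 2)) * neg_pow_sq i
    · have e1' : (i : ℕ) ≠ j := fun h => e1 (Fin.ext h)
      rw [if_neg e1, if_neg e1']
      by_cases e2 : (i : ℕ) + 1 = j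
      · rw [if_pos (Or.inl e2), if_pos (Or.inl e2), ← e2, pow_succ]
        linear_combination (x i * y j) * neg_pow_sq i
      by_cases e3 : (j : ℕ) + 1 = i
      · rw [if_pos (Or.inr e3), if_pos (Or.inr e3), ← e3, pow_succ]
        linear_combination (x i * y j) * neg_pow_sq j
      · rw [if_neg (by tauto), if_neg (by tauto)]; simp
  have hFs : ∀ z, ∃ x, F x = z := by
    intro z
    obtain ⟨x, hx⟩ := H.surj z
    refine ⟨fun i => (-1) ^ (i : ℕ) * x i, ?_⟩
    rw [hF, ← hx, Finset.sum_range]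
    apply Finset.sum_congr rfl
    intro i _
    rw [← mul_assoc, neg_pow_sq, one_mul]
  obtain ⟨G, hG⟩ : ∃ G : (Fin m.length → ℤ) →+ (Fin (2 * s - 1) → ℤ),
      ∀ x t, G x t = ε t * F x (σ t) :=
    ⟨AddMonoidHom.mk' (fun x t => ε t * F x (σ t))
      (by intro a b; funext t; simp [mul_add]), fun x t => rfl⟩
  have hGf : ∀ x, fHom s (G x) = chiHom m x := by
    intro x
    rw [← hFc]
    change ∑ i : Fin (2 * s - 1), (if (i : ℕ) < s then 3 else 1) * G x i = ∑ i, c i * F x i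
    rw [← Equiv.sum_comp σ (fun i => c i * F x i)]
    apply Finset.sum_congr rfl
    intro t _
    rw [hG, (hσ t).2]; ring
  have hGQ : ∀ x y, ∑ t, G x t * G y t = QForm m x y := by
    intro x y
    rw [← hFQ]
    change _ = ∑ i, F x i * F y i
    rw [← Equiv.sum_comp σ (fun i => F x i * F y i)]
    apply Finset.sum_congr rfl
    intro t _
    rw [hG, hG]
    linear_combination (F x (σ t) * F y (σ t)) * (hσ t).1
  have hGs : ∀ z, ∃ x, G x = z := by
    intro z
    obtain ⟨x, hx⟩ := hFs (fun t => ε (σ.symm t) * z (σ.symm t))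
    refine ⟨x, ?_⟩
    funext t
    rw [hG, hx]
    simp only [Equiv.symm_apply_apply]
    linear_combination (z t) * (hσ t).1
  have hmem : ∀ x : kerChi m, G x.1 ∈ fPerp s := by
    intro x
    have h := x.2
    rw [fPerp, AddMonoidHom.mem_ker, hGf]
    exact h
  have hval : ∀ x : kerChi m,
      (((G.comp (kerChi m).subtype).codRestrict (fPerp s) hmem) x).val = G x.val := fun x => rfl
  refine ⟨(G.comp (kerChi m).subtype).codRestrict (fPerp s) hmem, ?_, ?_, ?_⟩
  · rintro ⟨z, hz⟩
    obtain ⟨x, rfl⟩ := hGs z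
    refine ⟨⟨x, ?_⟩, rfl⟩
    rw [kerChi, AddMonoidHom.mem_ker, ← hGf]
    exact hz
  · intro x y
    simp only [hval]
    exact hGQ _ _
  · intro x
    rw [← Subtype.coe_inj, hval]
    constructor
    · intro h y
      rw [← hGQ]
      have h' : G x.val = 0 := h
      simp [h']
    · intro h
      have h0 := h x
      rw [← hGQ] at h0
      funext t
      have := (Finset.sum_eq_zero_iff_of_nonneg (fun t _ => mul_self_nonneg (G x.val t))).1 h0 t
        (Finset.mem_univ t)
      simpa using this
end

section
/- Let (m_1, …, m_k) be an admissible distance sequence with k = 2s−1 odd (s ≥ 1), let χ : Q(m) → ℤ be the linear functional with χ(q_i) = m_i for all i, and let K = Ker χ equipped with the restriction of the bilinear form of Q(m). Then the quotient of K by its radical is isometric to the lattice D_{2s−2}. -/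
/-- The lattice `D_n = {x ∈ ℤ^n : x_1 + … + x_n is even}` (with `D_0 = 0`). -/
def Dlat (n : ℕ) : AddSubgroup (Fin n → ℤ) where
  carrier := {x | Even (∑ i, x i)}
  zero_mem' := by simp
  add_mem' := by
    intro a b ha hb
    simpa [Finset.sum_add_distrib] using ha.add hb
  neg_mem' := by
    intro a ha
    simpa using ha.neg

/-- Gram matrix entries of `Q(m)`. -/
def gramQ {k : ℕ} (m : Fin k → ℤ) (i j : Fin k) : ℤ :=
  if i = j then m i - 2
      else if (i : ℕ) + 1 = (j : ℕ) ∨ (j : ℕ) + 1 = (i : ℕ) then 1 else 0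

/-- `Q(m)` is realised by vectors spanning `ℤ^n`, with a controlled relation among them. -/
def GoodSeq (k n : ℕ) (m : Fin k → ℤ) : Prop :=
  k = n + 1 ∧ ∃ v : Fin k → Fin n → ℤ,
    (∀ i j, ∑ t, v i t * v j t = gramQ m i j) ∧
    (∀ d : Fin n → ℤ, ∃ x : Fin k → ℤ, ∀ t, ∑ i, x i * v i t = d t) ∧
    (∃ r : Fin k → ℤ, (∀ t, ∑ i, r i * v i t = 0) ∧
      (∀ i : Fin k, (i : ℕ) = 0 → r i = 1) ∧ (∀ i : Fin k, (i : ℕ) + 1 = k → r i = (-1) ^ n))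

/-- sign of the old vectors after insertion at `p` -/
def sgnAt (p j : ℕ) : ℤ := if j < p then 1 else -1

/-- new coordinate of the old vectors after insertion at `p` -/
def epsAt (p j : ℕ) : ℤ := if j + 1 = p ∨ j = p then 1 else 0

theorem sgnAt_sq (p j : ℕ) : sgnAt p j * sgnAt p j = 1 := by
  unfold sgnAt; split_ifs <;> simp

theorem goodSeq_step_aux {k n : ℕ} {m : Fin k → ℤ} (h : GoodSeq k n m)
    (m' : Fin (k + 1) → ℤ) (p : Fin (k + 1)) (hp : m' p = 3)
    (hm : ∀ j : Fin k, m' (p.succAbove j) = m j + epsAt p j) :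
    GoodSeq (k + 1) (n + 1) m' := by
  obtain ⟨hk, v, hv, hspan, r, hr, hr0, hr1⟩ := h
  let v' : Fin (k + 1) → Fin (n + 1) → ℤ :=
    p.insertNth (α := fun _ => Fin (n + 1) → ℤ) (Fin.cons 1 (fun _ => 0))
      (fun j => Fin.cons (epsAt p j) (fun t => sgnAt p j * v j t))
  have vp : v' p = Fin.cons 1 (fun _ => 0) := by simp [v']
  have vs : ∀ j, v' (p.succAbove j) = Fin.cons (epsAt p j) (fun t => sgnAt p j * v j t) := by
    intro j; simp [v']
  let lift : ℤ → (Fin k → ℤ) → Fin (k + 1) → ℤ := fun d x =>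
    p.insertNth (α := fun _ => ℤ) (d - ∑ j : Fin k, sgnAt p j * x j * epsAt p j)
      (fun j => sgnAt p j * x j)
  have liftp : ∀ d x, lift d x p = d - ∑ j : Fin k, sgnAt p j * x j * epsAt p j := by
    intro d x; simp [lift]
  have lifts : ∀ d x j, lift d x (p.succAbove j) = sgnAt p j * x j := by
    intro d x j; simp [lift]
  have lift0 : ∀ d x, ∑ i, lift d x i * v' i 0 = d := by
    intro d x
    rw [Fin.sum_univ_succAbove _ p]
    simp [liftp, lifts, vp, vs]
  have liftS : ∀ d x t, ∑ i, lift d x i * v' i (Fin.succ t) = ∑ j, x j * v j t := by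
    intro d x t
    rw [Fin.sum_univ_succAbove _ p]
    simp only [liftp, lifts, vp, vs, Fin.cons_succ, mul_zero, zero_add]
    refine Finset.sum_congr rfl fun j _ => ?_
    linear_combination (x j * v j t) * sgnAt_sq p j
  have sv : ∀ j : Fin k, ((p.succAbove j : Fin (k + 1)) : ℕ) = if (j : ℕ) < p then (j : ℕ) else j + 1 := by
    intro j
    unfold Fin.succAbove
    simp only [Fin.lt_def, Fin.val_castSucc]
    split_ifs <;> simp
  refine ⟨by omega, v', ?_, ?_, ?_⟩
  · intro i j
    rw [Fin.sum_univ_succ]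
    rcases Fin.eq_self_or_eq_succAbove p i with hi | ⟨i, rfl⟩ <;>
    rcases Fin.eq_self_or_eq_succAbove p j with hj | ⟨j, rfl⟩
    · subst hi hj
      simp [vp, gramQ, hp]
    · subst hi
      have := sv j
      simp only [vp, vs, gramQ, Fin.cons_zero, Fin.cons_succ, zero_mul, Finset.sum_const_zero,
        Fin.ext_iff, epsAt]
      split_ifs at * <;> first | omega | simp
    · subst hj
      have := sv i
      simp only [vp, vs, gramQ, Fin.cons_zero, Fin.cons_succ, mul_zero, Finset.sum_const_zero,
        Fin.ext_iff, epsAt]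
      split_ifs at * <;> first | omega | simp
    · have h1 : ∑ t : Fin n, v' (p.succAbove i) t.succ * v' (p.succAbove j) t.succ
          = sgnAt p i * sgnAt p j * gramQ m i j := by
        rw [← hv, Finset.mul_sum]
        simp only [vs, Fin.cons_succ]
        exact Finset.sum_congr rfl fun t _ => by ring
      rw [h1]
      simp only [vs, Fin.cons_zero]
      by_cases hij : i = j
      · subst hij
        simp only [gramQ, if_true, sgnAt_sq, hm]
        unfold epsAt
        split_ifs <;> ring
      · have hij' : (i : ℕ) ≠ j := fun h => hij (Fin.ext h)
        have hij2 : p.succAbove i ≠ p.succAbove j := fun h => hij (Fin.succAbove_right_injective h)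
        have a := sv i
        have b := sv j
        simp only [gramQ, if_neg hij, if_neg hij2, a, b, epsAt, sgnAt]
        clear * - hij'
        split_ifs <;> first | omega | simp
  · intro d
    obtain ⟨x, hx⟩ := hspan (fun t => d t.succ)
    refine ⟨lift (d 0) x, fun t => ?_⟩
    refine Fin.cases (lift0 _ _) (fun t => ?_) t
    rw [liftS, hx]
  · refine ⟨lift 0 r, fun t => ?_, ?_, ?_⟩
    · refine Fin.cases (lift0 _ _) (fun t => ?_) t
      rw [liftS, hr]
    · intro i hi
      rcases Fin.eq_self_or_eq_succAbove p i with rfl | ⟨j, rfl⟩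
      · rw [liftp, Finset.sum_eq_single (⟨0, by omega⟩ : Fin k)]
        · simp [sgnAt, epsAt, hi, hr0]
        · intro b _ hb
          have : (b : ℕ) ≠ 0 := fun h => hb (Fin.ext h)
          simp [epsAt, hi, this]
        · simp
      · rw [sv] at hi
        rw [lifts]
        split_ifs at hi with h
        · simp [sgnAt, h, hr0 j hi]
    · intro i hi
      rcases Fin.eq_self_or_eq_succAbove p i with rfl | ⟨j, rfl⟩
      · rw [liftp, Finset.sum_eq_single (⟨k - 1, by omega⟩ : Fin k)]
        · have h1 : k - 1 < (i : ℕ) := by omega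
          have h2 : k - 1 + 1 = (i : ℕ) := by omega
          rw [hr1 _ (by simp; omega)]
          simp [sgnAt, epsAt, h1, h2, pow_succ]
        · intro b _ hb
          have : (b : ℕ) ≠ k - 1 := fun h => hb (Fin.ext h)
          have h1 : ¬ ((b : ℕ) + 1 = i ∨ (b : ℕ) = i) := by omega
          simp [epsAt, h1]
        · simp
      · rw [sv] at hi
        rw [lifts]
        split_ifs at hi with h
        · omega
        · rw [hr1 j (by omega)]
          simp [sgnAt, h, pow_succ]

theorem goodSeq_step {k n k' : ℕ} {m : Fin k → ℤ} (h : GoodSeq k n m) (hk' : k' = k + 1)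
    (m' : Fin k' → ℤ) (p : ℕ) (hp : p ≤ k) (h0 : ∀ i : Fin k', (i : ℕ) = p → m' i = 3)
    (h1 : ∀ (i : Fin k') (j : Fin k), (j : ℕ) < p → (i : ℕ) = j → m' i = m j + epsAt p j)
    (h2 : ∀ (i : Fin k') (j : Fin k), p ≤ (j : ℕ) → (i : ℕ) = j + 1 → m' i = m j + epsAt p j) :
    GoodSeq k' (n + 1) m' := by
  subst hk'
  refine goodSeq_step_aux h m' ⟨p, by omega⟩ (h0 _ rfl) fun j => ?_
  by_cases hj : (j : ℕ) < p
  · refine h1 _ j hj ?_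
    simp [Fin.succAbove, Fin.lt_def, hj]
  · refine h2 _ j (by omega) ?_
    simp [Fin.succAbove, Fin.lt_def, hj]

theorem goodSeq_of_adm {l : List ℤ} (h : AdmSeq l) : ∃ n, GoodSeq l.length n l.get := by
  induction h with
  | base =>
    refine ⟨0, rfl, fun _ => Fin.elim0, ?_, ?_, fun _ => 1, ?_, ?_, ?_⟩
    · intro i j
      have hi : i = (0 : Fin 1) := Subsingleton.elim (α := Fin 1) _ _
      have hj : j = (0 : Fin 1) := Subsingleton.elim (α := Fin 1) _ _
      subst hi hj
      simp [gramQ]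
    · exact fun d => ⟨fun _ => 0, fun t => t.elim0⟩
    · exact fun t => t.elim0
    · simp
    · simp
  | left a l _ ih =>
    obtain ⟨n, hn⟩ := ih
    refine ⟨n + 1, goodSeq_step hn (by simp) _ 0 (by simp) ?_ ?_ ?_⟩
    · rintro ⟨i, hi⟩ h
      simp only at h; subst h; simp
    · intro i j h; omega
    · rintro ⟨i, hi⟩ ⟨j, hj⟩ _ h
      simp only at h; subst h
      rcases j with _ | j <;> simp [epsAt]
  | right l a _ ih =>
    obtain ⟨n, hn⟩ := ih
    refine ⟨n + 1, goodSeq_step hn (by simp) _ (l.length + 1) (by simp) ?_ ?_ ?_⟩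
    · rintro ⟨i, hi⟩ h
      simp only at h; subst h; simp
    · rintro ⟨i, hi⟩ ⟨j, hj⟩ h h'
      simp only at h h'; subst h'
      simp only [List.get_eq_getElem, epsAt, List.getElem_append]
      by_cases hl : i < l.length
      · have e1 : ¬ (i + 1 = l.length + 1 ∨ i = l.length + 1) := by omega
        rw [if_neg e1]; simp [hl]
      · have : i = l.length := by omega
        subst this; simp
    · rintro ⟨i, hi⟩ ⟨j, hj⟩ h h'
      simp at h hj
      omega
  | mid l₁ a b l₂ _ ih =>
    obtain ⟨n, hn⟩ := ih
    refine ⟨n + 1, goodSeq_step hn (by simp; omega) _ (l₁.length + 1) (by simp) ?_ ?_ ?_⟩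
    · rintro ⟨i, hi⟩ h
      simp only at h; subst h; simp
    · rintro ⟨i, hi⟩ ⟨j, hj⟩ h h'
      simp only at h h'; subst h'
      simp only [List.get_eq_getElem, epsAt, List.getElem_append]
      by_cases hl : i < l₁.length
      · have e1 : ¬ (i + 1 = l₁.length + 1 ∨ i = l₁.length + 1) := by omega
        rw [if_neg e1]; simp [hl]
      · have : i = l₁.length := by omega
        subst this; simp
    · rintro ⟨i, hi⟩ ⟨j, hj⟩ h h'
      simp only at h h'; subst h'
      obtain ⟨c, rfl⟩ := Nat.exists_eq_add_of_le h
      simp only [List.get_eq_getElem, epsAt]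
      rw [List.getElem_append_right (by omega), List.getElem_append_right (by omega)]
      have e1 : l₁.length + 1 + c + 1 - l₁.length = c + 2 := by omega
      have e2 : l₁.length + 1 + c - l₁.length = c + 1 := by omega
      simp only [e1, e2]
      rcases c with _ | c
      · simp
      · have e1 : ¬ (l₁.length + 1 + (c + 1) + 1 = l₁.length + 1 ∨
          l₁.length + 1 + (c + 1) = l₁.length + 1) := by omega
        rw [if_neg e1]; simp

theorem gramQ_row {k : ℕ} (m : Fin k → ℤ) (i : Fin k) :
    ∑ j, gramQ m i j = m i - (if (i : ℕ) = 0 then 1 else 0) - (if (i : ℕ) + 1 = k then 1 else 0) := by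
  have h : ∀ j, gramQ m i j = (if i = j then m i - 2 else 0) +
      (if (i : ℕ) + 1 = j then 1 else 0) + (if (j : ℕ) + 1 = i then 1 else 0) := by
    intro j
    simp only [gramQ, Fin.ext_iff]
    split_ifs <;> first | omega | simp
  have h1 : ∑ j : Fin k, (if (i : ℕ) + 1 = j then (1 : ℤ) else 0)
      = 1 - (if (i : ℕ) + 1 = k then 1 else 0) := by
    by_cases hk : (i : ℕ) + 1 = k
    · rw [Finset.sum_eq_zero]
      · simp [hk]
      · intro j _
        rw [if_neg]; omega
    · rw [Finset.sum_eq_single (⟨i + 1, by omega⟩ : Fin k)]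
      · simp [hk]
      · intro b _ hb
        rw [if_neg]
        exact fun h => hb (Fin.ext h.symm)
      · simp
  have h2 : ∑ j : Fin k, (if (j : ℕ) + 1 = i then (1 : ℤ) else 0)
      = 1 - (if (i : ℕ) = 0 then 1 else 0) := by
    by_cases hk : (i : ℕ) = 0
    · rw [Finset.sum_eq_zero]
      · simp [hk]
      · intro j _
        rw [if_neg]; omega
    · rw [Finset.sum_eq_single (⟨i - 1, by omega⟩ : Fin k)]
      · have : (i : ℕ) - 1 + 1 = i := by omega
        simp [hk, this]
      · intro b _ hb
        rw [if_neg]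
        intro h
        exact hb (Fin.ext (by simp; omega))
      · simp
  simp only [h, Finset.sum_add_distrib, h1, h2]
  simp
  ring

theorem chi_radical {k n : ℕ} (hk : k = n + 1) (m : Fin k → ℤ) (v : Fin k → Fin n → ℤ)
    (hv : ∀ i j, ∑ t, v i t * v j t = gramQ m i j) (r : Fin k → ℤ)
    (hr : ∀ t, ∑ i, r i * v i t = 0)
    (hr0 : ∀ i : Fin k, (i : ℕ) = 0 → r i = 1) (hr1 : ∀ i : Fin k, (i : ℕ) + 1 = k → r i = (-1) ^ n) :
    ∑ i, m i * r i = 1 + (-1) ^ n := by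
  have h1 : ∑ i, r i * ∑ j, gramQ m i j = 0 := by
    calc ∑ i, r i * ∑ j, gramQ m i j = ∑ i, ∑ j, ∑ t, r i * v i t * v j t := by
          simp only [← hv, Finset.mul_sum, mul_assoc]
      _ = ∑ j, ∑ t, ∑ i, r i * v i t * v j t := by
          rw [Finset.sum_comm]
          exact Finset.sum_congr rfl fun j _ => Finset.sum_comm
      _ = 0 := by
          simp only [← Finset.sum_mul, hr, zero_mul, Finset.sum_const_zero]
  simp only [gramQ_row, mul_sub, Finset.sum_sub_distrib] at h1
  have h2 : ∑ i : Fin k, r i * (if (i : ℕ) = 0 then 1 else 0) = 1 := by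
    rw [Finset.sum_eq_single (⟨0, by omega⟩ : Fin k)]
    · simp [hr0]
    · intro b _ hb
      have : (b : ℕ) ≠ 0 := fun h => hb (Fin.ext h)
      simp [this]
    · simp
  have h3 : ∑ i : Fin k, r i * (if (i : ℕ) + 1 = k then 1 else 0) = (-1) ^ n := by
    rw [Finset.sum_eq_single (⟨n, by omega⟩ : Fin k)]
    · rw [hr1 _ (by simp; omega)]
      simp [hk]
    · intro b _ hb
      have : ¬ (b : ℕ) + 1 = k := fun h => hb (Fin.ext (by simp; omega))
      simp [this]
    · simp
  rw [h2, h3] at h1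
  simp only [mul_comm (m _)]
  linarith

theorem kerChi_aux (m : List ℤ) (N : ℕ) (hN : Even N) (h : GoodSeq m.length N m.get) :
    ∃ φ : kerChi m →+ Dlat N,
      Function.Surjective φ ∧
      (∀ x y : kerChi m,
        (∑ t : Fin N, (φ x).val t * (φ y).val t) = QForm m x.val y.val) ∧
      (∀ x : kerChi m, φ x = 0 ↔ ∀ y : kerChi m, QForm m x.val y.val = 0) := by
  obtain ⟨hk, v, hv, hspan, r, hr, hr0, hr1⟩ := h
  have hchi := chi_radical hk _ v hv r hr hr0 hr1
  rw [hN.neg_one_pow] at hchi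
  have mem : ∀ x, x ∈ kerChi m ↔ ∑ i, m.get i * x i = 0 := fun x => Iff.rfl
  have par1 : ∀ i, Even (m.get i - ∑ t, v i t) := by
    intro i
    have e : m.get i = 2 + ∑ t, v i t * v i t := by rw [hv]; simp [gramQ]
    rw [e, add_sub_assoc, ← Finset.sum_sub_distrib]
    refine Even.add even_two (Finset.even_sum _ fun t _ => ?_)
    have := Int.even_mul_pred_self (v i t)
    rwa [mul_sub, mul_one] at this
  have par : ∀ x : Fin m.length → ℤ,
      Even ((∑ i, m.get i * x i) - ∑ t, ∑ i, x i * v i t) := by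
    intro x
    rw [Finset.sum_comm, ← Finset.sum_sub_distrib]
    refine Finset.even_sum _ fun i _ => ?_
    rw [← Finset.mul_sum, mul_comm, ← mul_sub]
    exact (par1 i).mul_left _
  let φ : kerChi m →+ Dlat N := AddMonoidHom.mk'
    (fun x => ⟨fun t => ∑ i, x.val i * v i t, by
      have h1 := par x.val
      rw [(mem _).1 x.2, zero_sub, even_neg] at h1
      exact h1⟩) (by
      intro x y
      ext t
      simp [add_mul, Finset.sum_add_distrib])
  have hφ : ∀ x t, (φ x).val t = ∑ i, x.val i * v i t := fun _ _ => rfl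
  have hsurj : Function.Surjective φ := by
    rintro ⟨d, hd⟩
    obtain ⟨x, hx⟩ := hspan d
    have h1 := par x
    simp only [hx] at h1
    have hd' : Even (∑ t, d t) := hd
    have h2 : Even (∑ i, m.get i * x i) := by
      have := h1.add hd'
      rwa [sub_add_cancel] at this
    obtain ⟨c, hc⟩ := h2
    refine ⟨⟨fun i => x i - c * r i, ?_⟩, ?_⟩
    · rw [mem]
      simp only [mul_sub, Finset.sum_sub_distrib, mul_left_comm _ c, ← Finset.mul_sum, hchi, hc]
      ring
    · ext t
      rw [hφ]
      simp only [sub_mul, Finset.sum_sub_distrib, mul_assoc, ← Finset.mul_sum, hr, hx]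
      simp
  have hform : ∀ x y : kerChi m,
        (∑ t : Fin N, (φ x).val t * (φ y).val t) = QForm m x.val y.val := by
    intro x y
    have e : QForm m x.val y.val = ∑ i, ∑ j, gramQ m.get i j * x.val i * y.val j := rfl
    rw [e]
    simp only [hφ, ← hv, Finset.sum_mul]
    rw [Finset.sum_comm]
    refine Finset.sum_congr rfl fun i _ => ?_
    rw [Finset.sum_comm]
    refine Finset.sum_congr rfl fun t _ => ?_
    rw [Finset.mul_sum]
    exact Finset.sum_congr rfl fun j _ => by ring
  refine ⟨φ, hsurj, hform, fun x => ⟨fun hx y => ?_, fun hx => ?_⟩⟩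
  · rw [← hform, hx]; simp
  · have h1 := hx x
    rw [← hform, Finset.sum_eq_zero_iff_of_nonneg (fun t _ => mul_self_nonneg _)] at h1
    ext t
    exact mul_self_eq_zero.1 (h1 t (Finset.mem_univ _))


/-- for an admissible distance sequence `m` of odd length `k = 2s - 1`
(`s ≥ 1`), the quotient of `K = Ker χ ⊆ Q(m)` by its radical is isometric to the
lattice `D_{2s-2}`; equivalently, there is a surjective form-preserving homomorphism
`K → D_{2s-2}` whose kernel is exactly the radical of `K`. -/
theorem kerChi_mod_radical_odd (m : List ℤ) (hm : AdmSeq m) (s : ℕ) (hs : 1 ≤ s)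
    (hk : m.length = 2 * s - 1) :
    ∃ φ : kerChi m →+ Dlat (2 * s - 2),
      Function.Surjective φ ∧
      (∀ x y : kerChi m,
        (∑ t : Fin (2 * s - 2), (φ x).val t * (φ y).val t) = QForm m x.val y.val) ∧
      (∀ x : kerChi m, φ x = 0 ↔ ∀ y : kerChi m, QForm m x.val y.val = 0) := by
  obtain ⟨n, hn⟩ := goodSeq_of_adm hm
  have e : 2 * s - 2 = n := by have := hn.1; omega
  have hev : Even n := ⟨s - 1, by omega⟩
  rw [← e] at hn hev
  exact kerChi_aux m _ hev hn
end
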